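/- If u : ℤ → 𝒳 is discrete almost automorphic and g : ℤ → ℤ is discrete almost automorphic (as a ℤ-valued function), then the function t ↦ u(t − g(t)) is discrete almost automorphic. -/

import Mathlib

open Filter Topology

/-- A function `f : ℤ → 𝕏` is discrete almost automorphic if for every sequence of
integers there exist a subsequence `(k_n)` and a function `f̄` such that
`f(t + k_n) → f̄(t)` and `f̄(t − k_n) → f(t)` pointwise in `t`. -/
def DiscreteAlmostAutomorphic {𝕏 : Type*} [TopologicalSpace 𝕏] (f : ℤ → 𝕏) : Prop :=
  ∀ k' : ℕ → ℤ, ∃ (σ : ℕ → ℕ) (fbar : ℤ → 𝕏), StrictMono σ ∧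
    (∀ t : ℤ, Tendsto (fun n => f (t + k' (σ n))) atTop (𝓝 (fbar t))) ∧
    (∀ t : ℤ, Tendsto (fun n => fbar (t - k' (σ n))) atTop (𝓝 (f t)))

/-!
The translates of `u` assemble into the map `t ↦ u(t + ·)` with values in the product space `ℤ → 𝕏`,
and this map is again almost automorphic because convergence in a product is pointwise. Pair it
with `g`; since `ℤ` is discrete, `(v, s) ↦ v(−s)` is a continuous map `(ℤ → 𝕏) × ℤ → 𝕏`, and it
sends the pair `(u(t + ·), g(t))` to `u(t − g(t))`.
-/

namespace DiscreteAlmostAutomorphic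

variable {𝕏 𝕐 : Type*} [TopologicalSpace 𝕏] [TopologicalSpace 𝕐]

theorem continuous_comp {f : ℤ → 𝕏} {φ : 𝕏 → 𝕐} (hf : DiscreteAlmostAutomorphic f)
    (hφ : Continuous φ) : DiscreteAlmostAutomorphic (φ ∘ f) := by
  intro k'
  obtain ⟨σ, fbar, hσ, hadd, hsub⟩ := hf k'
  exact ⟨σ, φ ∘ fbar, hσ, fun t => (hφ.tendsto _).comp (hadd t),
    fun t => (hφ.tendsto _).comp (hsub t)⟩

theorem prodMk {f : ℤ → 𝕏} {g : ℤ → 𝕐} (hf : DiscreteAlmostAutomorphic f)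
    (hg : DiscreteAlmostAutomorphic g) : DiscreteAlmostAutomorphic fun t => (f t, g t) := by
  intro k'
  obtain ⟨σ, fbar, hσ, hf_add, hf_sub⟩ := hf k'
  obtain ⟨τ, gbar, hτ, hg_add, hg_sub⟩ := hg (k' ∘ σ)
  exact ⟨σ ∘ τ, fun t => (fbar t, gbar t), hσ.comp hτ,
    fun t => ((hf_add t).comp hτ.tendsto_atTop).prodMk_nhds (hg_add t),
    fun t => ((hf_sub t).comp hτ.tendsto_atTop).prodMk_nhds (hg_sub t)⟩

theorem translates {u : ℤ → 𝕏} (hu : DiscreteAlmostAutomorphic u) :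
    DiscreteAlmostAutomorphic fun t s => u (t + s) := by
  intro k'
  obtain ⟨σ, ubar, hσ, hadd, hsub⟩ := hu k'
  refine ⟨σ, fun t s => ubar (t + s), hσ, fun t => tendsto_pi_nhds.2 fun s => ?_,
    fun t => tendsto_pi_nhds.2 fun s => ?_⟩
  · simpa only [add_right_comm] using hadd (t + s)
  · simpa only [sub_add_eq_add_sub] using hsub (t + s)

end DiscreteAlmostAutomorphic

theorem stmt_8_general {𝕏 : Type*} [TopologicalSpace 𝕏] {u : ℤ → 𝕏} {g : ℤ → ℤ}
    (hu : DiscreteAlmostAutomorphic u) (hg : DiscreteAlmostAutomorphic g) :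
    DiscreteAlmostAutomorphic fun t => u (t - g t) := by
  have eval_neg_continuous : Continuous fun p : (ℤ → 𝕏) × ℤ => p.1 (-p.2) :=
    continuous_prod_of_discrete_right.2 fun s => continuous_apply (-s)
  exact ((hu.translates.prodMk hg).continuous_comp eval_neg_continuous :)

/-- If `u : ℤ → 𝕏` and `g : ℤ → ℤ` are discrete almost automorphic,
then `t ↦ u(t − g(t))` is discrete almost automorphic. -/
theorem stmt_8 {𝕏 : Type*} [NormedAddCommGroup 𝕏]
    (u : ℤ → 𝕏) (g : ℤ → ℤ)
    (hu : DiscreteAlmostAutomorphic u) (hg : DiscreteAlmostAutomorphic g) :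
    DiscreteAlmostAutomorphic fun t => u (t - g t) :=
  stmt_8_general hu hg
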